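/- For the uniform distribution on [a,b] and any r ≥ 1, an N-tuple a = x_1 < x_2 < ⋯ < x_N = b satisfies the dual-quantization master equation (Δx_i)^r ∫_0^1 Ψ_r(z)dz = (Δx_{i+1})^r ∫_0^1 Ψ_r(1−z)dz for i = 2,…,N−1 if and only if x_i = a + (i−1)(b−a)/(N−1) for all i; i.e. the unique critical grid is the uniform grid. -/

import Mathlib

open Real MeasureTheory intervalIntegral in
theorem stmt_19 (a b : ℝ) (hab : a < b) (r : ℝ) (hr : 1 ≤ r)
    (N : ℕ) (hN : 3 ≤ N) (Ψ : ℝ → ℝ)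
    (hΨ : ∀ z : ℝ, Ψ z = (r - 1) * z * (1 - z) ^ r + z ^ (r + 1) + r * z ^ 2 * (1 - z) ^ (r - 1))
    (x : ℕ → ℝ) (hx1 : x 1 = a) (hxN : x N = b)
    (hmono : ∀ i : ℕ, 1 ≤ i → i < N → x i < x (i + 1)) :
    (∀ i : ℕ, 2 ≤ i → i ≤ N - 1 →
        (x i - x (i - 1)) ^ r * ∫ z in (0:ℝ)..1, Ψ z
          = (x (i + 1) - x i) ^ r * ∫ z in (0:ℝ)..1, Ψ (1 - z))
      ↔ ∀ i : ℕ, 1 ≤ i → i ≤ N → x i = a + (i - 1 : ℝ) * (b - a) / (N - 1 : ℝ) := by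
  have hr0 : 0 < r := by linarith
  have hcont : Continuous Ψ := by
    have : Ψ = fun z => (r - 1) * z * (1 - z) ^ r + z ^ (r + 1) + r * z ^ 2 * (1 - z) ^ (r - 1) :=
      funext hΨ
    rw [this]
    have h1 : Continuous fun z : ℝ => (1 - z) ^ r :=
      (continuous_const.sub continuous_id).rpow_const (fun _ => Or.inr (by linarith))
    have h2 : Continuous fun z : ℝ => z ^ (r + 1) :=
      continuous_id.rpow_const (fun _ => Or.inr (by linarith))
    have h3 : Continuous fun z : ℝ => (1 - z) ^ (r - 1) :=
      (continuous_const.sub continuous_id).rpow_const (fun _ => Or.inr (by linarith))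
    fun_prop
  have hpos : 0 < ∫ z in (0:ℝ)..1, Ψ z := by
    refine intervalIntegral_pos_of_pos_on (hcont.intervalIntegrable 0 1) ?_ one_pos
    rintro z ⟨hz0, hz1⟩
    rw [hΨ]
    have h1 : 0 < 1 - z := by linarith
    have h2 : 0 ≤ r - 1 := by linarith
    have h3 : 0 ≤ r := by linarith
    have e1 : 0 ≤ (r - 1) * z * (1 - z) ^ r := by positivity
    have e2 : 0 < z ^ (r + 1) := by positivity
    have e3 : 0 ≤ r * z ^ 2 * (1 - z) ^ (r - 1) := by positivity
    linarith
  have hsymm : ∫ z in (0:ℝ)..1, Ψ (1 - z) = ∫ z in (0:ℝ)..1, Ψ z := by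
    simp [intervalIntegral.integral_comp_sub_left]
  rw [hsymm]
  have hN1 : (0:ℝ) < (N:ℝ) - 1 := by
    have : (3:ℝ) ≤ N := by exact_mod_cast hN
    linarith
  constructor
  · intro h
    have hstep : ∀ i : ℕ, 1 ≤ i → i < N → x (i + 1) - x i = x 2 - x 1 := by
      intro i hi
      induction i, hi using Nat.le_induction with
      | base => intro _; rfl
      | succ i hi ih =>
        intro hlt
        have h0 := h (i + 1) (by omega) (by omega)
        have h1 := mul_right_cancel₀ hpos.ne' h0
        rw [Nat.add_sub_cancel] at h1
        have m1 := hmono i hi (by omega)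
        have m2 := hmono (i + 1) (by omega) hlt
        have h2 := (Real.rpow_left_inj (by linarith) (by linarith) (by positivity : r ≠ 0)).1 h1
        rw [← h2]
        exact ih (by omega)
    have hlin : ∀ i : ℕ, 1 ≤ i → i ≤ N → x i = a + ((i:ℝ) - 1) * (x 2 - x 1) := by
      intro i hi
      induction i, hi using Nat.le_induction with
      | base => intro _; simp [hx1]
      | succ i hi ih =>
        intro hle
        have h1 := ih (by omega)
        have h2 := hstep i hi (by omega)
        push_cast
        linarith
    have hd := hlin N (by omega) le_rfl
    rw [hxN] at hd
    intro i hi hiN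
    rw [hlin i hi hiN, hd]
    field_simp
    ring
  · intro h i hi hiN
    congr 2
    obtain ⟨j, rfl⟩ : ∃ j, i = j + 1 := ⟨i - 1, by omega⟩
    rw [Nat.add_sub_cancel, h (j + 1) (by omega) (by omega), h j (by omega) (by omega),
      h (j + 1 + 1) (by omega) (by omega)]
    push_cast
    ring
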